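/- Let b>0, d∈ℕ, and let c_1∈(0,1/2) and c_2∈(1/2,1). There is a constant q_3(c_1,c_2)<1, depending only on c_1, c_2, b, and d, such that for every finite graph G=(V,E) with maximal degree at most d and Cheeger constant strictly greater than b, and every p > q_3(c_1,c_2): μ_p( there exists a connected component whose number of vertices lies in the interval [c_1|V|, c_2|V|) ) ≤ (4/c_1)·e^{−|V|} + 4·e^{−|V|}. -/

import Mathlib

/-!
A connected component `S` of the percolation configuration forces all edges of its boundary to be
closed. When `c₁|V| ≤ |S| < c₂|V|`, applying the Cheeger inequality to the smaller of `S` and `Sᶜ`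
gives at least `b min(c₁, 1 - c₂)|V|` boundary edges, so a given `S` is a component with probability
at most `(1 - p) ^ (b min(c₁, 1 - c₂)|V|)`. A union bound over all `2^|V|` vertex sets suffices: for
`p` close to `1` the entropy factor is beaten by an exponential of arbitrarily large rate.
-/

open Filter

noncomputable section

/-- The spanning subgraph of `G` determined by the configuration `x : {0,1}^E`:
an edge of `G` is retained iff its coordinate equals `true`. -/
def percoGraph {V : Type*} (G : SimpleGraph V) (x : G.edgeSet → Bool) : SimpleGraph V :=
  SimpleGraph.fromEdgeSet {e : Sym2 V | ∃ h : e ∈ G.edgeSet, x ⟨e, h⟩ = true}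

/-- The vertex set of the connected component of `v` in the configuration `x`. -/
def percoComp {V : Type*} (G : SimpleGraph V) (x : G.edgeSet → Bool) (v : V) : Set V :=
  {u | (percoGraph G x).Reachable v u}

/-- The number of vertices of the connected component of `v` in the configuration `x`. -/
def compSize {V : Type*} (G : SimpleGraph V) (x : G.edgeSet → Bool) (v : V) : ℕ :=
  (percoComp G x v).ncard

/-- `L⁽¹⁾`: the number of vertices of the largest connected component of the configuration. -/
def largestComp {V : Type*} (G : SimpleGraph V) (x : G.edgeSet → Bool) : ℕ :=
  sSup (Set.range (compSize G x))

/-- The probability of a single configuration under the product Bernoulli(p) measure. -/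
def configProb {E : Type*} (p : ℝ) (x : E → Bool) : ℝ :=
  ∏ᶠ e : E, if x e then p else 1 - p

/-- The product Bernoulli(p) probability of a set of configurations. -/
def probC {E : Type*} (p : ℝ) (A : Set (E → Bool)) : ℝ :=
  ∑ᶠ x ∈ A, configProb p x

/-- Expectation under the product Bernoulli(p) measure. -/
def expC {E : Type*} (p : ℝ) (f : (E → Bool) → ℝ) : ℝ :=
  ∑ᶠ x : E → Bool, configProb p x * f x

/-- Variance under the product Bernoulli(p) measure. -/
def varC {E : Type*} (p : ℝ) (f : (E → Bool) → ℝ) : ℝ :=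
  expC p (fun x => f x ^ 2) - (expC p f) ^ 2

open Classical in
/-- The configuration `x` with coordinate `e` set to `b`. -/
def setEdge {E : Type*} (x : E → Bool) (e : E) (b : Bool) : E → Bool :=
  fun e' => if e' = e then b else x e'

/-- The operator `Δ_{e,p} f (x) = f(x) - ∫ f(x) dx(e)`. -/
def deltaE {E : Type*} (p : ℝ) (f : (E → Bool) → ℝ) (e : E) (x : E → Bool) : ℝ :=
  f x - (p * f (setEdge x e true) + (1 - p) * f (setEdge x e false))

/-- The norm `‖g‖_{1,p}`. -/
def norm1 {E : Type*} (p : ℝ) (g : (E → Bool) → ℝ) : ℝ :=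
  expC p fun x => |g x|

/-- The squared norm `‖g‖_{2,p}²`. -/
def sqNorm2 {E : Type*} (p : ℝ) (g : (E → Bool) → ℝ) : ℝ :=
  expC p fun x => g x ^ 2

/-- `|E(S, Sᶜ)|`: the number of edges of `G` with one endpoint in `S` and the other outside `S`
(counted via the ordered pair whose first coordinate lies in `S`). -/
def edgeBoundaryCard {V : Type*} (G : SimpleGraph V) (S : Set V) : ℕ :=
  {q : V × V | G.Adj q.1 q.2 ∧ q.1 ∈ S ∧ q.2 ∉ S}.ncard

/-- The maximal degree of `G` is at most `d`. -/
def DegreeLE {V : Type*} (G : SimpleGraph V) (d : ℕ) : Prop :=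
  ∀ v, {u | G.Adj v u}.ncard ≤ d

/-- The Cheeger (edge-isoperimetric) constant of `G` is strictly greater than `b`. -/
def CheegerGT {V : Type*} (G : SimpleGraph V) (b : ℝ) : Prop :=
  ∀ S : Set V, 0 < S.ncard → 2 * S.ncard ≤ Nat.card V →
    b * (S.ncard : ℝ) < (edgeBoundaryCard G S : ℝ)

/-- A `(b,d)`-expander: a sequence of finite graphs with `|V_n| → ∞`, maximal degree at most `d`
and Cheeger constant greater than `b`. -/
structure ExpanderSeq (b : ℝ) (d : ℕ) where
  V : ℕ → Type
  finV : ∀ n, Finite (V n)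
  G : ∀ n, SimpleGraph (V n)
  card_tendsto : Tendsto (fun n => Nat.card (V n)) atTop atTop
  degree_le : ∀ n, DegreeLE (G n) d
  cheeger_gt : ∀ n, CheegerGT (G n) b

section ProductBernoulli

variable {E : Type*} {p : ℝ}

lemma configProb_nonneg (hp0 : 0 ≤ p) (hp1 : p ≤ 1) (x : E → Bool) : 0 ≤ configProb p x :=
  finprod_nonneg fun e => by split_ifs <;> linarith

lemma probC_nonneg (hp0 : 0 ≤ p) (hp1 : p ≤ 1) (A : Set (E → Bool)) : 0 ≤ probC p A :=
  finsum_nonneg fun x => finsum_nonneg fun _ => configProb_nonneg hp0 hp1 x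

variable [Finite E]

lemma probC_mono (hp0 : 0 ≤ p) (hp1 : p ≤ 1) {A B : Set (E → Bool)} (hAB : A ⊆ B) :
    probC p A ≤ probC p B := by
  have hsplit : probC p A + probC p (B \ A) = probC p B :=
    finsum_mem_add_sdiff hAB B.toFinite
  linarith [probC_nonneg hp0 hp1 (B \ A)]

lemma probC_union_le (hp0 : 0 ≤ p) (hp1 : p ≤ 1) (A B : Set (E → Bool)) :
    probC p (A ∪ B) ≤ probC p A + probC p B := by
  have hsplit : probC p (A ∪ B) + probC p (A ∩ B) = probC p A + probC p B :=
    finsum_mem_union_inter A.toFinite B.toFinite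
  linarith [probC_nonneg hp0 hp1 (A ∩ B)]

lemma probC_biUnion_le (hp0 : 0 ≤ p) (hp1 : p ≤ 1) {ι : Type*} (s : Finset ι)
    (A : ι → Set (E → Bool)) : probC p (⋃ i ∈ s, A i) ≤ ∑ i ∈ s, probC p (A i) :=
  Finset.apply_union_le_sum finsum_mem_empty (probC_union_le hp0 hp1 _ _) s

lemma probC_forall_mem_eq_false (p : ℝ) (F : Set E) :
    probC p {x | ∀ e ∈ F, x e = false} = (1 - p) ^ F.ncard := by
  classical
  have := Fintype.ofFinite E
  let t (e : E) : Finset Bool := if e ∈ F then {false} else Finset.univ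
  have hpi : {x : E → Bool | ∀ e ∈ F, x e = false} = Fintype.piFinset t := by
    ext x
    simp only [Set.mem_ofPred_eq, Finset.mem_coe, Fintype.mem_piFinset]
    refine forall_congr' fun e => ?_
    by_cases he : e ∈ F <;> simp [t, he]
  have hfactor (e : E) :
      ∑ c ∈ t e, (if c then p else 1 - p) = if e ∈ F then 1 - p else 1 := by
    by_cases he : e ∈ F <;> simp [t, he]
  calc probC p {x | ∀ e ∈ F, x e = false}
      = ∑ x ∈ Fintype.piFinset t, ∏ e, (if x e then p else 1 - p) := by
        simp only [probC, configProb, hpi, finsum_mem_coe_finset, finprod_eq_prod_of_fintype]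
    _ = ∏ e, ∑ c ∈ t e, (if c then p else 1 - p) :=
        (Finset.prod_univ_sum t fun _ c => if c then p else 1 - p).symm
    _ = (1 - p) ^ F.ncard := by
        simp [hfactor, Finset.prod_ite, Set.ncard_eq_toFinset_card']

end ProductBernoulli

section EdgeBoundary

variable {V : Type*} (G : SimpleGraph V) (S : Set V)

/-- The edge boundary `E(S, Sᶜ)`, as a set of coordinates of the configuration space `{0,1}^E`. -/
def edgeBoundary : Set G.edgeSet :=
  {e | ∃ u ∈ S, ∃ v ∉ S, e.1 = s(u, v)}

lemma ncard_edgeBoundary : (edgeBoundary G S).ncard = edgeBoundaryCard G S := by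
  let B : Set (V × V) := {q | G.Adj q.1 q.2 ∧ q.1 ∈ S ∧ q.2 ∉ S}
  have himage : Subtype.val '' edgeBoundary G S = (fun q : V × V => s(q.1, q.2)) '' B := by
    ext e
    constructor
    · rintro ⟨⟨_, hadj⟩, ⟨u, hu, v, hv, rfl⟩, rfl⟩
      exact ⟨(u, v), ⟨hadj, hu, hv⟩, rfl⟩
    · rintro ⟨⟨u, v⟩, ⟨hadj, hu, hv⟩, rfl⟩
      exact ⟨⟨s(u, v), hadj⟩, ⟨u, hu, v, hv, rfl⟩, rfl⟩
  have hinj : Set.InjOn (fun q : V × V => s(q.1, q.2)) B := by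
    rintro ⟨u, v⟩ ⟨-, hu, -⟩ ⟨u', v'⟩ ⟨-, -, hv'⟩ h
    rcases Sym2.eq_iff.mp h with ⟨rfl, rfl⟩ | ⟨rfl, rfl⟩
    · rfl
    · exact absurd hu hv'
  calc (edgeBoundary G S).ncard
      = (Subtype.val '' edgeBoundary G S).ncard :=
        (Set.ncard_image_of_injective _ Subtype.val_injective).symm
    _ = edgeBoundaryCard G S := by rw [himage, hinj.ncard_image]; rfl

lemma edgeBoundaryCard_compl : edgeBoundaryCard G Sᶜ = edgeBoundaryCard G S := by
  have hcompl : edgeBoundary G Sᶜ = edgeBoundary G S := by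
    ext e
    constructor
    all_goals
      rintro ⟨u, hu, v, hv, he⟩
      exact ⟨v, by simpa using hv, u, by simpa using hu, he.trans Sym2.eq_swap⟩
  rw [← ncard_edgeBoundary, ← ncard_edgeBoundary, hcompl]

end EdgeBoundary

section Percolation

variable {V : Type*} {G : SimpleGraph V}

lemma eq_false_of_mem_edgeBoundary_percoComp {x : G.edgeSet → Bool} {v : V} {e : G.edgeSet}
    (he : e ∈ edgeBoundary G (percoComp G x v)) : x e = false := by
  obtain ⟨⟨_, hadj⟩, u, hu, w, hw, rfl⟩ := e, he
  by_contra hopen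
  have hstep : (percoGraph G x).Adj u w :=
    (SimpleGraph.fromEdgeSet_adj _).mpr ⟨⟨hadj, by simpa using hopen⟩, G.ne_of_adj hadj⟩
  exact hw (SimpleGraph.Reachable.trans hu hstep.reachable)

variable [Finite V] {p : ℝ}

lemma probC_exists_percoComp_eq_le (hp0 : 0 ≤ p) (hp1 : p ≤ 1) (S : Set V) :
    probC p {x : G.edgeSet → Bool | ∃ v, percoComp G x v = S} ≤
      (1 - p) ^ edgeBoundaryCard G S := by
  rw [← ncard_edgeBoundary, ← probC_forall_mem_eq_false]
  refine probC_mono hp0 hp1 ?_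
  rintro x ⟨v, rfl⟩ e he
  exact eq_false_of_mem_edgeBoundary_percoComp he

lemma probC_exists_percoComp_mem_le (hp0 : 0 ≤ p) (hp1 : p ≤ 1) {𝒮 : Set (Set V)} {k : ℕ}
    (hk : ∀ S ∈ 𝒮, k ≤ edgeBoundaryCard G S) :
    probC p {x : G.edgeSet → Bool | ∃ v, percoComp G x v ∈ 𝒮} ≤
      2 ^ Nat.card V * (1 - p) ^ k := by
  classical
  have := Fintype.ofFinite V
  have hunion : {x : G.edgeSet → Bool | ∃ v, percoComp G x v ∈ 𝒮} =
      ⋃ S ∈ 𝒮.toFinset, {x | ∃ v, percoComp G x v = S} := by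
    ext x
    simp
  have hterm : ∀ S ∈ 𝒮.toFinset,
      probC p {x : G.edgeSet → Bool | ∃ v, percoComp G x v = S} ≤ (1 - p) ^ k := fun S hS =>
    (probC_exists_percoComp_eq_le hp0 hp1 S).trans <|
      pow_le_pow_of_le_one (by linarith) (by linarith) (hk S (Set.mem_toFinset.mp hS))
  have hcard : 𝒮.toFinset.card ≤ 2 ^ Nat.card V := by
    simpa [Nat.card_eq_fintype_card] using Finset.card_le_univ 𝒮.toFinset
  calc probC p {x : G.edgeSet → Bool | ∃ v, percoComp G x v ∈ 𝒮}
      ≤ ∑ S ∈ 𝒮.toFinset, probC p {x : G.edgeSet → Bool | ∃ v, percoComp G x v = S} :=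
        hunion ▸ probC_biUnion_le hp0 hp1 _ _
    _ ≤ 𝒮.toFinset.card * (1 - p) ^ k := by
        simpa using Finset.sum_le_card_nsmul _ _ _ hterm
    _ ≤ 2 ^ Nat.card V * (1 - p) ^ k :=
        mul_le_mul_of_nonneg_right (by exact_mod_cast hcard)
          (pow_nonneg (sub_nonneg.mpr hp1) k)

end Percolation

section Cheeger

variable {V : Type*} {G : SimpleGraph V} {b : ℝ}

lemma CheegerGT.mul_ncard_le_edgeBoundaryCard (hG : CheegerGT G b) {S : Set V}
    (hS : 2 * S.ncard ≤ Nat.card V) : b * S.ncard ≤ edgeBoundaryCard G S := by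
  rcases S.ncard.eq_zero_or_pos with hzero | hpos
  · simp [hzero]
  · exact (hG S hpos hS).le

variable [Finite V]

lemma CheegerGT.mul_min_ncard_le_edgeBoundaryCard (hG : CheegerGT G b) (S : Set V) :
    b * min (S.ncard : ℝ) Sᶜ.ncard ≤ edgeBoundaryCard G S := by
  have hcard : S.ncard + Sᶜ.ncard = Nat.card V := Set.ncard_add_ncard_compl S
  rcases le_total S.ncard Sᶜ.ncard with h | h
  · rw [min_eq_left (by exact_mod_cast h)]
    exact hG.mul_ncard_le_edgeBoundaryCard (by omega)
  · rw [min_eq_right (by exact_mod_cast h), ← edgeBoundaryCard_compl]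
    exact hG.mul_ncard_le_edgeBoundaryCard (by omega)

lemma CheegerGT.mul_card_le_edgeBoundaryCard (hG : CheegerGT G b) (hb : 0 ≤ b) {c₁ c₂ : ℝ}
    {S : Set V} (h₁ : c₁ * Nat.card V ≤ S.ncard) (h₂ : S.ncard ≤ c₂ * Nat.card V) :
    b * min c₁ (1 - c₂) * Nat.card V ≤ edgeBoundaryCard G S := by
  have hcard : (S.ncard : ℝ) + Sᶜ.ncard = Nat.card V := by
    exact_mod_cast Set.ncard_add_ncard_compl S
  calc b * min c₁ (1 - c₂) * Nat.card V
      = b * min (c₁ * Nat.card V) ((1 - c₂) * Nat.card V) := by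
        rw [mul_assoc, min_mul_of_nonneg _ _ (Nat.cast_nonneg _)]
    _ ≤ b * min (S.ncard : ℝ) Sᶜ.ncard := by
        gcongr
        linarith
    _ ≤ edgeBoundaryCard G S := hG.mul_min_ncard_le_edgeBoundaryCard S

theorem CheegerGT.probC_exists_compSize_mem_Ico_le (hG : CheegerGT G b) (hb : 0 ≤ b) {p : ℝ}
    (hp0 : 0 ≤ p) (hp1 : p ≤ 1) (c₁ c₂ : ℝ) :
    probC p {x : G.edgeSet → Bool | ∃ v,
        c₁ * Nat.card V ≤ compSize G x v ∧ compSize G x v < c₂ * Nat.card V} ≤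
      2 ^ Nat.card V * (1 - p) ^ ⌈b * min c₁ (1 - c₂) * Nat.card V⌉₊ :=
  probC_exists_percoComp_mem_le hp0 hp1
    (𝒮 := {S | c₁ * Nat.card V ≤ S.ncard ∧ S.ncard < c₂ * Nat.card V})
    fun _ hS => Nat.ceil_le.mpr (hG.mul_card_le_edgeBoundaryCard hb hS.1 hS.2.le)

end Cheeger

lemma pow_mul_pow_ceil_le_exp_neg {C a q : ℝ} (hC : 1 ≤ C) (ha : 0 < a) (hq0 : 0 ≤ q)
    (hq : q ≤ Real.exp (-((1 + Real.log C) / a))) (n : ℕ) :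
    C ^ n * q ^ ⌈a * n⌉₊ ≤ Real.exp (-n) := by
  have hlog : 0 ≤ Real.log C := Real.log_nonneg hC
  have hCpow : C ^ n = Real.exp (n * Real.log C) := by
    rw [Real.exp_nat_mul, Real.exp_log (by linarith)]
  have hrate : n * (1 + Real.log C) ≤ ⌈a * n⌉₊ * ((1 + Real.log C) / a) :=
    calc n * (1 + Real.log C) = a * n * ((1 + Real.log C) / a) := by field_simp
      _ ≤ ⌈a * n⌉₊ * ((1 + Real.log C) / a) := by
        gcongr
        exact Nat.le_ceil _
  calc C ^ n * q ^ ⌈a * n⌉₊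
      ≤ C ^ n * Real.exp (-((1 + Real.log C) / a)) ^ ⌈a * n⌉₊ := by gcongr
    _ = Real.exp (n * Real.log C - ⌈a * n⌉₊ * ((1 + Real.log C) / a)) := by
        rw [hCpow, ← Real.exp_nat_mul, ← Real.exp_add, mul_neg, sub_eq_add_neg]
    _ ≤ Real.exp (-n) := by
        gcongr
        linarith

theorem stmt6_general {b : ℝ} (hb : 0 < b) {c₁ c₂ : ℝ} (hc₁ : 0 < c₁) (hc₂ : c₂ < 1) :
    ∃ q₃ < (1 : ℝ), ∀ (V : Type*) (_ : Finite V) (G : SimpleGraph V), CheegerGT G b →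
      ∀ p : ℝ, q₃ < p → p ≤ 1 →
        probC p {x : G.edgeSet → Bool | ∃ v,
            c₁ * Nat.card V ≤ compSize G x v ∧ compSize G x v < c₂ * Nat.card V} ≤
          Real.exp (-Nat.card V) := by
  have ha : 0 < b * min c₁ (1 - c₂) := mul_pos hb (lt_min hc₁ (sub_pos.mpr hc₂))
  set a := b * min c₁ (1 - c₂)
  set δ := Real.exp (-((1 + Real.log 2) / a))
  have hδ : δ ≤ 1 := Real.exp_le_one_iff.mpr (neg_nonpos.mpr (by positivity))
  refine ⟨1 - δ, sub_lt_self 1 (Real.exp_pos _), fun V _ G hG p hp hp1 => ?_⟩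
  calc _ ≤ 2 ^ Nat.card V * (1 - p) ^ ⌈a * Nat.card V⌉₊ :=
        hG.probC_exists_compSize_mem_Ico_le hb.le (by linarith) hp1 c₁ c₂
    _ ≤ Real.exp (-Nat.card V) :=
        pow_mul_pow_ceil_le_exp_neg one_le_two ha (by linarith) (by linarith) _

/-- no middle-sized component. For `c₁ ∈ (0,1/2)`, `c₂ ∈ (1/2,1)` there is
`q₃(c₁,c₂) < 1`, depending only on `c₁, c₂, b, d`, such that for every finite graph with
maximal degree at most `d` and Cheeger constant greater than `b`, and every `p > q₃`, the
probability of having a connected component of size in `[c₁|V|, c₂|V|)` is at most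
`(4/c₁) e^{-|V|} + 4 e^{-|V|}`. -/
theorem stmt6 (b : ℝ) (hb : 0 < b) (d : ℕ)
    (c1 : ℝ) (hc1 : c1 ∈ Set.Ioo (0 : ℝ) (1 / 2))
    (c2 : ℝ) (hc2 : c2 ∈ Set.Ioo (1 / 2 : ℝ) 1) :
    ∃ q3 < (1 : ℝ),
      ∀ (V : Type) (_ : Finite V) (G : SimpleGraph V), DegreeLE G d → CheegerGT G b →
        ∀ p : ℝ, q3 < p → p ≤ 1 →
          probC p {x : G.edgeSet → Bool | ∃ v : V,
              c1 * (Nat.card V : ℝ) ≤ (compSize G x v : ℝ) ∧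
              (compSize G x v : ℝ) < c2 * (Nat.card V : ℝ)} ≤
            (4 / c1) * Real.exp (-(Nat.card V : ℝ)) + 4 * Real.exp (-(Nat.card V : ℝ)) := by
  obtain ⟨q₃, hq₃, h⟩ := stmt6_general hb hc1.1 hc2.2
  exact ⟨q₃, hq₃, fun V _ G _ hG p hp hp1 => (h V ‹_› G hG p hp hp1).trans <|
    le_add_of_nonneg_of_le (mul_nonneg (div_pos four_pos hc1.1).le (Real.exp_pos _).le)
      (le_mul_of_one_le_left (Real.exp_pos _).le (by norm_num))⟩
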